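/- Let p = 1/2, so that f_{n,k} = (n choose k)·2^{−n} and z_{n,k} = (2k − n)/√n. For every n ≥ 1 and every integer k with n/2 < k ≤ n − 1, one has log( √n · f_{n,k} / (2·φ(z_{n,k+1})) ) ≤ α(k/n)·n + β_n(k/n), where α(w) = −w·log w − (1−w)·log(1−w) − 2w(1−w) + 1/2 − log 2 and β_n(w) = −(1/2)·log w − (1/2)·log(1−w) + 4w − 2 + 25/(12n). -/

import Mathlib

open MeasureTheory Filter

/-- The standard normal density. -/
noncomputable def normalPdf (x : ℝ) : ℝ := Real.exp (-x ^ 2 / 2) / Real.sqrt (2 * Real.pi)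

/-- Binomial probabilities `f_{n,k} = (n choose k) p^k (1-p)^(n-k)`. -/
noncomputable def binProb (p : ℝ) (n k : ℕ) : ℝ := (n.choose k : ℝ) * p ^ k * (1 - p) ^ (n - k)

/-- Standardized points `z_{n,k} = (k - np)/√(np(1-p))` (also used for `k = n+1`, `k = -1`). -/
noncomputable def zpt (p : ℝ) (n : ℕ) (k : ℤ) : ℝ :=
  ((k : ℝ) - n * p) / Real.sqrt (n * p * (1 - p))


/-- The exponential-rate function in the symmetric binomial-vs-Gaussian comparison. -/
noncomputable def αSym (w : ℝ) : ℝ :=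
  -w * Real.log w - (1 - w) * Real.log (1 - w) - 2 * w * (1 - w) + 1 / 2 - Real.log 2

/-- The lower-order correction term in the symmetric binomial-vs-Gaussian comparison. -/
noncomputable def βSym (n : ℕ) (w : ℝ) : ℝ :=
  -(1 / 2) * Real.log w - (1 / 2) * Real.log (1 - w) + 4 * w - 2 + 25 / (12 * n)

open Stirling in
/-- `log n!` through the Stirling sequence. -/
lemma log_fact_eq (n : ℕ) (hn : 1 ≤ n) :
    Real.log (n.factorial : ℝ) = Real.log (stirlingSeq n) + 1 / 2 * (Real.log 2 + Real.log n)
      + n * (Real.log n - 1) := by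
  have h := log_stirlingSeq_formula n
  have hn' : (n : ℝ) ≠ 0 := by positivity
  rw [Real.log_mul (by norm_num) hn', Real.log_div hn' (Real.exp_pos 1).ne', Real.log_exp] at h
  linarith

open Stirling in
lemma log_stirling_lower (n : ℕ) (hn : 1 ≤ n) :
    1 / 2 * Real.log Real.pi ≤ Real.log (stirlingSeq n) := by
  have h := sqrt_pi_le_stirlingSeq (n := n) (by omega)
  have h2 := Real.log_le_log (by positivity) h
  rw [Real.log_sqrt Real.pi_pos.le] at h2
  linarith

open Stirling in
lemma log_stirling_upper (n : ℕ) (hn : 1 ≤ n) :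
    Real.log (stirlingSeq n) ≤ 1 - 1 / 2 * Real.log 2 := by
  obtain ⟨m, rfl⟩ : ∃ m, n = m + 1 := ⟨n - 1, by omega⟩
  have h := log_stirlingSeq'_antitone (Nat.zero_le m)
  simp only [Function.comp, Nat.succ_eq_add_one, zero_add] at h
  rw [stirlingSeq_one, Real.log_div (Real.exp_pos 1).ne' (by positivity), Real.log_exp,
    Real.log_sqrt (by norm_num)] at h
  linarith

theorem log_ratio_bounded_by_rate_function_symmetric :
    ∀ n : ℕ, 1 ≤ n → ∀ k : ℕ, (n : ℝ) / 2 < k → k ≤ n - 1 →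
      Real.log (Real.sqrt n * binProb (1 / 2) n k / (2 * normalPdf (zpt (1 / 2) n (k + 1)))) ≤
        αSym ((k : ℝ) / n) * n + βSym n ((k : ℝ) / n) := by
  intro n hn k hk hkn
  obtain ⟨m, rfl⟩ : ∃ m, n = k + m := ⟨n - k, by omega⟩
  have hm : 1 ≤ m := by omega
  have hk1 : 1 ≤ k := by
    rcases Nat.eq_zero_or_pos k with h | h
    · subst h
      have : (0 : ℝ) ≤ ((0 + m : ℕ) : ℝ) / 2 := by positivity
      simp only [Nat.cast_zero] at hk
      linarith
    · exact h
  have hC : ((k + m).choose k : ℝ) ≠ 0 := by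
    exact_mod_cast (Nat.choose_pos (by omega)).ne'
  have hlogC : Real.log ((k + m).choose k : ℝ) = Real.log ((k + m).factorial : ℝ)
      - Real.log (k.factorial : ℝ) - Real.log (m.factorial : ℝ) := by
    have h := Nat.add_choose_mul_factorial_mul_factorial k m
    rw [← Nat.choose_symm_add] at h
    have h' : (((k + m).choose k : ℕ) : ℝ) * k.factorial * m.factorial
      = ((k + m).factorial : ℝ) := by exact_mod_cast h
    rw [← h', Real.log_mul (by positivity) (by positivity), Real.log_mul hC (by positivity)]
    ring
  rw [log_fact_eq _ hn, log_fact_eq _ hk1, log_fact_eq _ hm] at hlogC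
  have hu := log_stirling_upper _ hn
  have hl1 := log_stirling_lower _ hk1
  have hl2 := log_stirling_lower _ hm
  have hpi : Real.log 2 ≤ Real.log Real.pi :=
    Real.log_le_log (by norm_num) Real.two_le_pi
  have h2 := Real.log_two_gt_d9
  have hkR : (0 : ℝ) < k := by exact_mod_cast hk1
  have hmR : (0 : ℝ) < m := by exact_mod_cast hm
  have hN : (0 : ℝ) < (k : ℝ) + m := by positivity
  have hz : (zpt (1 / 2) (k + m) (k + 1)) ^ 2 / 2
      = ((k : ℝ) + 2 - m) ^ 2 / (2 * ((k : ℝ) + m)) := by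
    unfold zpt
    rw [div_pow, Real.sq_sqrt (by positivity)]
    push_cast
    field_simp
    ring
  have hphi : Real.log (normalPdf (zpt (1 / 2) (k + m) (k + 1)))
      = - (((k : ℝ) + 2 - m) ^ 2 / (2 * ((k : ℝ) + m)))
        - 1 / 2 * (Real.log 2 + Real.log Real.pi) := by
    unfold normalPdf
    rw [Real.log_div (Real.exp_pos _).ne' (by positivity), Real.log_exp,
      Real.log_sqrt (by positivity), Real.log_mul (by norm_num) Real.pi_pos.ne', neg_div, hz]
    ring
  have hphi0 : normalPdf (zpt (1 / 2) (k + m) (k + 1)) ≠ 0 := by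
    unfold normalPdf
    positivity
  have hbin : binProb (1 / 2) (k + m) k = ((k + m).choose k : ℝ) * (1 / 2) ^ (k + m) := by
    unfold binProb
    rw [Nat.add_sub_cancel_left, pow_add]
    norm_num
    ring
  have hw : 1 - (k : ℝ) / ((k + m : ℕ) : ℝ) = (m : ℝ) / ((k : ℝ) + m) := by
    push_cast
    field_simp
    ring
  have hlk : Real.log ((k : ℝ) / ((k : ℝ) + m)) = Real.log k - Real.log ((k : ℝ) + m) :=
    Real.log_div hkR.ne' hN.ne'
  have hlm : Real.log ((m : ℝ) / ((k : ℝ) + m)) = Real.log m - Real.log ((k : ℝ) + m) :=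
    Real.log_div hmR.ne' hN.ne'
  have hhalf : Real.log (1 / 2 : ℝ) = - Real.log 2 := by
    rw [one_div, Real.log_inv]
  rw [hbin, Real.log_div (by positivity) (by positivity), Real.log_mul (by positivity)
    (by positivity), Real.log_mul hC (by positivity), Real.log_mul (by norm_num) hphi0,
    Real.log_sqrt (by positivity), Real.log_pow, hphi, hhalf, hlogC]
  unfold αSym βSym
  rw [hw]
  push_cast at hu ⊢
  rw [hlk, hlm]
  have hq : (0 : ℝ) ≤ 1 / (12 * ((k : ℝ) + m)) := by positivity
  generalize Real.log (Stirling.stirlingSeq (k + m)) = sn at *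
  generalize Real.log (Stirling.stirlingSeq k) = sk at *
  generalize Real.log (Stirling.stirlingSeq m) = sm at *
  generalize Real.log ((k : ℝ) + m) = L at *
  generalize Real.log (k : ℝ) = Lk at *
  generalize Real.log (m : ℝ) = Lm at *
  generalize Real.log (2 : ℝ) = l2 at *
  generalize Real.log Real.pi = lp at *
  have key : (-((k : ℝ) / (k + m)) * (Lk - L) - (m : ℝ) / (k + m) * (Lm - L)
        - 2 * ((k : ℝ) / (k + m)) * ((m : ℝ) / (k + m)) + 1 / 2 - l2) * ((k : ℝ) + m)
      + (-(1 / 2) * (Lk - L) - 1 / 2 * (Lm - L) + 4 * ((k : ℝ) / (k + m)) - 2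
        + 25 / (12 * ((k : ℝ) + m)))
      = -k * (Lk - L) - m * (Lm - L) - (k + m) * l2
        + ((k : ℝ) + 2 - m) ^ 2 / (2 * ((k : ℝ) + m)) - 1 / 2 * (Lk - L) - 1 / 2 * (Lm - L)
        + 1 / (12 * ((k : ℝ) + m)) := by
    field_simp
    ring
  rw [key]
  linarith
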